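/- Let R = k[x^d, x^e y^ℓ, x^f y^m, y^n] with d,n>0, e,f,ℓ,m ≥ 0, (e,ℓ) ≠ (0,0). Then dim_k R/(x^d,y^n) ≥ |H|, where H is the subgroup of (ℤ/dℤ)⊕(ℤ/nℤ) generated by (e,ℓ),(f,m). Equivalently, the |H| monomials x^{ae+bf} y^{aℓ+bm} for (a,b) ∈ B_0 are linearly independent in R/(x^d,y^n). -/

import Mathlib

open MvPolynomial

set_option synthInstance.maxHeartbeats 1000000
set_option maxHeartbeats 2000000

/-!
Let `π` reduce exponent vectors in `ℕ × ℕ` modulo `(d, n)`, and let `S = ker π + ⟨u, v⟩` be the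
monoid of exponent vectors of `R`, where now `u = (e, ℓ)` and `v = (f, m)`. The monomials of `S`
from which neither `x ^ d` nor `y ^ n` can be split off form a basis of `R / (x ^ d, y ^ n)`. Since
`(d, 0)` and `(0, n)` generate `ker π`, these are the elements of `S` that are minimal in their
fibre of `π` for the product order. Every fibre over `π(S)` has a minimal element and, by Dickson's
lemma, there are finitely many of them, so the dimension is at least `|π(S)| ≥ |H|`.

For `(a, b) ∈ B₀` the vector `a u + b v` is minimal in its fibre: an element of the fibre strictly
below it gives, after cancelling, either a relation `β v ≡ α u` contradicting the minimality of `b₂`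
or of `a₃`, or a relation `α u + β v ≡ 0` with `0 < α ≤ a` and `0 < β ≤ b`. On the arm `a < a₃ - a₂`
adding `b₂ v ≡ a₂ u` to the latter gives `(b₂ - β) v ≡ (a₂ + α) u`, and on the arm `b < b₂ - b₃`
subtracting it from `a₃ u ≡ b₃ v` gives `(a₃ - α) u ≡ (b₃ + β) v`; by minimality neither exists.
-/

section QuotientBasis

open scoped Pointwise

variable {M : Type*} [AddCommMonoid M]

/-- The Apéry set of the monoid `M` relative to `T`: the elements from which no element of `T`
can be split off. -/
def aperySet (T : Set M) : Set M := (Set.univ + T)ᶜ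

variable {k A : Type*} [CommRing k] [CommRing A] [Algebra k A] (b : Module.Basis M k A)

theorem restrictScalars_span_image_basis (hb : ∀ r s, b (r + s) = b r * b s) (T : Set M) :
    (Ideal.span (b '' T)).restrictScalars k = Submodule.span k (b '' (aperySet T)ᶜ) := by
  have image_add : b '' (Set.univ + T) = b '' Set.univ • b '' T := Set.image_image2_distrib hb
  rw [aperySet, compl_compl, image_add, Set.image_univ, Ideal.span,
    Submodule.span_smul_of_span_eq_top b.span_eq]

theorem linearIndependent_mk_aperySet (hb : ∀ r s, b (r + s) = b r * b s) (T : Set M) :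
    LinearIndependent k fun s : aperySet T ↦ Ideal.Quotient.mk (Ideal.span (b '' T)) (b s) := by
  refine (b.linearIndependent.comp _ Subtype.val_injective).map
    (f := (Ideal.Quotient.mkₐ k (Ideal.span (b '' T))).toLinearMap) ?_
  have ker_eq : (Ideal.Quotient.mkₐ k (Ideal.span (b '' T))).toLinearMap.ker =
      Submodule.span k (b '' (aperySet T)ᶜ) := by
    rw [← restrictScalars_span_image_basis b hb]
    ext x
    exact Ideal.Quotient.eq_zero_iff_mem
  rw [ker_eq, Set.range_comp, Subtype.range_coe]
  exact b.linearIndependent.disjoint_span_image disjoint_compl_right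

theorem span_mk_aperySet (hb : ∀ r s, b (r + s) = b r * b s) (T : Set M) :
    Submodule.span k
      (Set.range fun s : aperySet T ↦ Ideal.Quotient.mk (Ideal.span (b '' T)) (b s)) = ⊤ := by
  set V := Submodule.span k
    (Set.range fun s : aperySet T ↦ Ideal.Quotient.mk (Ideal.span (b '' T)) (b s))
  let mk := (Ideal.Quotient.mkₐ k (Ideal.span (b '' T))).toLinearMap
  have mk_basis_mem (s : M) : mk (b s) ∈ V := by
    by_cases hs : s ∈ aperySet T
    · exact Submodule.subset_span ⟨⟨s, hs⟩, rfl⟩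
    · have : b s ∈ (Ideal.span (b '' T)).restrictScalars k := by
        rw [restrictScalars_span_image_basis b hb]
        exact Submodule.subset_span ⟨s, hs, rfl⟩
      have hmk : mk (b s) = 0 := Ideal.Quotient.eq_zero_iff_mem.2 this
      exact hmk ▸ V.zero_mem
  have range_le : mk.range ≤ V := by
    rw [LinearMap.range_eq_map, ← b.span_eq, Submodule.map_span_le]
    rintro _ ⟨s, rfl⟩
    exact mk_basis_mem s
  rwa [LinearMap.range_eq_top.2 (Ideal.Quotient.mkₐ_surjective k _), top_le_iff] at range_le

theorem finrank_quotient_span_image_basis [Nontrivial k] (hb : ∀ r s, b (r + s) = b r * b s)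
    (T : Set M) : Module.finrank k (A ⧸ Ideal.span (b '' T)) = Nat.card (aperySet T) :=
  Module.finrank_eq_nat_card_basis
    (.mk (linearIndependent_mk_aperySet b hb T) (span_mk_aperySet b hb T).ge)

end QuotientBasis

section Fibers

open scoped Pointwise

theorem eq_zero_or_mem_univ_add_of_mem_closure {M : Type*} [AddCommMonoid M] {T : Set M} {p : M}
    (hp : p ∈ AddSubmonoid.closure T) : p = 0 ∨ p ∈ Set.univ + T := by
  induction hp using AddSubmonoid.closure_induction_right with
  | zero => exact .inl rfl
  | add_right q _ t ht _ => exact .inr (Set.add_mem_add (Set.mem_univ q) ht)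

variable {N Q : Type*} [AddCommMonoid N] [PartialOrder N] [IsOrderedCancelAddMonoid N]
  [CanonicallyOrderedAdd N] [AddCommGroup Q] {π : N →+ Q} {S : AddSubmonoid N} {T : Set S}

theorem mem_aperySet_iff_minimal
    (hT : (AddSubmonoid.closure T).map S.subtype = AddMonoidHom.mker π) (h0 : 0 ∉ T) {s : S} :
    s ∈ aperySet T ↔ Minimal (fun r : S ↦ π r = π s) s := by
  constructor
  · refine fun hs ↦ ⟨rfl, fun r hr hrs ↦ ?_⟩
    obtain ⟨p, hp⟩ := exists_add_of_le (show (r : N) ≤ s from hrs)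
    have hp_ker : π p = 0 := by simpa [hr] using congrArg π hp
    obtain ⟨q, hq, rfl⟩ : p ∈ (AddSubmonoid.closure T).map S.subtype := hT ▸ hp_ker
    obtain rfl : s = r + q := Subtype.ext hp
    obtain rfl | ⟨q', -, t, ht, rfl⟩ := eq_zero_or_mem_univ_add_of_mem_closure hq
    · simp
    · exact absurd ⟨r + q', trivial, t, ht, add_assoc r q' t⟩ hs
  · rintro hs ⟨r, -, t, ht, rfl⟩
    have ht_ker : (t : N) ∈ AddMonoidHom.mker π :=
      hT ▸ ⟨t, AddSubmonoid.subset_closure ht, rfl⟩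
    have hle : r + t ≤ r :=
      hs.2 (by simpa using AddMonoidHom.mem_mker.1 ht_ker) (show (r : N) ≤ r + t from le_self_add)
    have : t = 0 := Subtype.ext (by simpa using show (r + t : N) ≤ r from hle)
    exact h0 (this ▸ ht)

theorem finite_aperySet [Finite Q] [WellQuasiOrderedLE N]
    (hT : (AddSubmonoid.closure T).map S.subtype = AddMonoidHom.mker π) (h0 : 0 ∉ T) :
    (aperySet T).Finite := by
  have : WellQuasiOrderedLE S := ⟨fun f ↦ wellQuasiOrdered_le fun i ↦ (f i : N)⟩
  refine .of_finite_fibers (fun s : S ↦ π s) (Set.toFinite _) fun q _ ↦ ?_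
  refine (WellQuasiOrderedLE.finite_of_isAntichain
    (setOfPred_minimal_antichain fun r : S ↦ π r = q)).subset ?_
  rintro s ⟨hs, rfl⟩
  exact (mem_aperySet_iff_minimal hT h0).1 hs

theorem card_map_le_card_aperySet [Finite Q] [WellQuasiOrderedLE N]
    (hT : (AddSubmonoid.closure T).map S.subtype = AddMonoidHom.mker π) (h0 : 0 ∉ T) :
    Nat.card (S.map π) ≤ Nat.card (aperySet T) := by
  have : Finite (aperySet T) := finite_aperySet hT h0
  refine Nat.card_le_card_of_surjective
    (fun s : aperySet T ↦ ⟨π (s : S), AddSubmonoid.mem_map_of_mem π (s : S).2⟩) ?_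
  rintro ⟨_, s, hs, rfl⟩
  obtain ⟨r, hr⟩ := exists_minimal_of_wellFoundedLT (fun r : S ↦ π r = π s) ⟨⟨s, hs⟩, rfl⟩
  refine ⟨⟨r, (mem_aperySet_iff_minimal hT h0).2 (by rwa [hr.prop])⟩, Subtype.ext hr.prop⟩

end Fibers

section MonomialSubalgebra

variable {k A N : Type*} [CommRing k] [CommRing A] [Algebra k A] [AddCommMonoid N]
  (φ : Multiplicative N →* A)

theorem toSubmodule_adjoin_image (G : Set N) :
    Subalgebra.toSubmodule (Algebra.adjoin k ((fun a ↦ φ (.ofAdd a)) '' G)) =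
      Submodule.span k (Set.range fun s : AddSubmonoid.closure G ↦ φ (.ofAdd (s : N))) := by
  have image_eq : (fun a ↦ φ (.ofAdd a)) '' G = φ '' (Multiplicative.toAdd ⁻¹' G) := by
    rw [← Equiv.image_symm_eq_preimage, Set.image_image]; rfl
  have closure_eq : (Submonoid.closure (φ '' (Multiplicative.toAdd ⁻¹' G)) : Set A) =
      Set.range fun s : AddSubmonoid.closure G ↦ φ (.ofAdd (s : N)) := by
    rw [← MonoidHom.map_mclosure, ← AddSubmonoid.toSubmonoid_closure]
    ext x
    constructor
    · rintro ⟨s, hs, rfl⟩; exact ⟨⟨_, hs⟩, rfl⟩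
    · rintro ⟨s, rfl⟩; exact ⟨_, s.2, rfl⟩
  rw [Algebra.adjoin_eq_span, image_eq, closure_eq]

theorem exists_basis_adjoin_image (hφ : LinearIndependent k fun a : N ↦ φ (.ofAdd a)) (G : Set N) :
    ∃ b : Module.Basis (AddSubmonoid.closure G) k (Algebra.adjoin k ((fun a ↦ φ (.ofAdd a)) '' G)),
      ∀ s, (b s : A) = φ (.ofAdd (s : N)) := by
  have hli : LinearIndependent k fun s : AddSubmonoid.closure G ↦ φ (.ofAdd (s : N)) :=
    hφ.comp _ Subtype.val_injective
  refine ⟨(Module.Basis.span hli).map (.ofEq _ _ (toSubmodule_adjoin_image φ G).symm), fun s ↦ ?_⟩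
  exact congrArg Subtype.val (Module.Basis.span_apply hli s)

end MonomialSubalgebra

section MinimalRelations

section Nsmul

variable {N : Type*} [AddCommMonoid N] (a b c : ℕ) (u v : N)

theorem add_nsmul_add_nsmul_left : (a + c) • u + b • v = a • u + b • v + c • u := by
  rw [add_nsmul, add_right_comm]

theorem add_nsmul_add_nsmul_right : a • u + (b + c) • v = a • u + b • v + c • v := by
  rw [add_nsmul, add_assoc]

end Nsmul

variable {N Q : Type*} [AddCommMonoid N] [PartialOrder N] [AddCommGroup Q] {π : N →+ Q} {u v : N}
  {a₂ b₂ a₃ b₃ a b a' b' : ℕ}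

/-- A pair of relations between `u` and `v` modulo the kernel of `π`, minimal in the following
sense: `b₂` bounds from below every positive `b` for which `b • v ≡ a • u` with `b • v` not strictly
below `a • u`, and `a₃` bounds from below every positive `a` for which `a • u ≡ b • v` with
`b • v < a • u`. The relations `rel₂` and `rel₃` themselves are only required to hold. -/
structure MinimalRelations (π : N →+ Q) (u v : N) (a₂ b₂ a₃ b₃ : ℕ) : Prop where
  rel₂ : π (b₂ • v) = π (a₂ • u)
  le₂ : ∀ a b : ℕ, 0 < b → π (b • v) = π (a • u) → ¬ b • v < a • u → b₂ ≤ b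
  rel₃ : π (a₃ • u) = π (b₃ • v)
  le₃ : ∀ a b : ℕ, 0 < a → π (a • u) = π (b • v) → b • v < a • u → a₃ ≤ a

/-- The index set `B₀` of the linearly independent monomials, with `a₁ = a₃ - a₂` and
`b₁ = b₂ - b₃`. The subtractions truncate, so that an arm of negative width is empty. -/
def staircase (a₂ b₂ a₃ b₃ : ℕ) : Set (ℕ × ℕ) :=
  {w | (w.1 < a₃ - a₂ ∧ w.2 < b₂) ∨ (w.1 < a₃ ∧ w.2 < b₂ - b₃)}

theorem fst_lt_of_mem_staircase (hw : (a, b) ∈ staircase a₂ b₂ a₃ b₃) : a < a₃ := by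
  obtain ⟨ha, -⟩ | ⟨ha, -⟩ := hw
  exacts [ha.trans_le (Nat.sub_le _ _), ha]

theorem snd_lt_of_mem_staircase (hw : (a, b) ∈ staircase a₂ b₂ a₃ b₃) : b < b₂ := by
  obtain ⟨-, hb⟩ | ⟨-, hb⟩ := hw
  exacts [hb, hb.trans_le (Nat.sub_le _ _)]

namespace MinimalRelations

section

variable (h : MinimalRelations π u v a₂ b₂ a₃ b₃)
include h

theorem map_nsmul_ne (ha : 0 < a) (ha₃ : a < a₃) (hb : 0 < b) (hb₂ : b < b₂) :
    π (a • u) ≠ π (b • v) := by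
  intro hab
  by_cases hlt : b • v < a • u
  · exact (h.le₃ a b ha hab hlt).not_gt ha₃
  · exact (h.le₂ a b hb hab.symm hlt).not_gt hb₂

theorem map_add_ne_zero {α β : ℕ} (hw : (a, b) ∈ staircase a₂ b₂ a₃ b₃) (hα : 0 < α) (hαa : α ≤ a)
    (hβ : 0 < β) (hβb : β ≤ b) : π (α • u + β • v) ≠ 0 := by
  have ha := fst_lt_of_mem_staircase hw
  have hb := snd_lt_of_mem_staircase hw
  intro hαβ
  obtain ⟨ha', -⟩ | ⟨-, hb'⟩ := hw
  · refine h.map_nsmul_ne (a := a₂ + α) (b := b₂ - β) (by omega) (by omega) (by omega) (by omega) ?_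
    refine add_right_cancel (b := π (β • v)) ?_
    rw [← map_add, ← map_add, ← add_nsmul, Nat.sub_add_cancel (by omega), h.rel₂, add_nsmul,
      add_assoc, map_add, hαβ, add_zero]
  · refine h.map_nsmul_ne (a := a₃ - α) (b := b₃ + β) (by omega) (by omega) (by omega) (by omega) ?_
    refine add_right_cancel (b := π (α • u)) ?_
    rw [← map_add, ← map_add, ← add_nsmul, Nat.sub_add_cancel (by omega), h.rel₃, add_nsmul,
      add_assoc, add_comm (β • v), map_add, hαβ, add_zero]

end

variable [IsOrderedCancelAddMonoid N] [CanonicallyOrderedAdd N]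

theorem of_lt_addOrderOf [Finite Q]
    (rel₂ : π (b₂ • v) = π (a₂ • u))
    (le₂ : ∀ a b : ℕ, a < addOrderOf (π u) → 0 < b → π (b • v) = π (a • u) →
      ¬ b • v < a • u → b₂ ≤ b)
    (rel₃ : π (a₃ • u) = π (b₃ • v))
    (le₃ : ∀ a b : ℕ, b < addOrderOf (π v) → 0 < a → π (a • u) = π (b • v) →
      b • v < a • u → a₃ ≤ a) :
    MinimalRelations π u v a₂ b₂ a₃ b₃ where
  rel₂ := rel₂
  le₂ a b hb hab hlt := by
    refine le₂ (a % addOrderOf (π u)) b (Nat.mod_lt _ (addOrderOf_pos _)) hb ?_ fun hlt' ↦ ?_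
    · rw [hab, map_nsmul, map_nsmul, mod_addOrderOf_nsmul]
    · exact hlt (hlt'.trans_le (nsmul_le_nsmul_left zero_le (Nat.mod_le _ _)))
  rel₃ := rel₃
  le₃ a b ha hab hlt := by
    refine le₃ a (b % addOrderOf (π v)) (Nat.mod_lt _ (addOrderOf_pos _)) ha ?_ ?_
    · rw [hab, map_nsmul, map_nsmul, mod_addOrderOf_nsmul]
    · exact (nsmul_le_nsmul_left zero_le (Nat.mod_le _ _)).trans_lt hlt

variable (h : MinimalRelations π u v a₂ b₂ a₃ b₃)
include h

theorem not_lt_of_mem_staircase (hw : (a, b) ∈ staircase a₂ b₂ a₃ b₃)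
    (hπ : π (a' • u + b' • v) = π (a • u + b • v)) : ¬ a' • u + b' • v < a • u + b • v := by
  intro hlt
  have ha₃ := fst_lt_of_mem_staircase hw
  have hb₂ := snd_lt_of_mem_staircase hw
  rcases le_or_gt a a' with ha | ha <;> rcases le_or_gt b b' with hb | hb
  · exact hlt.not_ge (add_le_add (nsmul_le_nsmul_left zero_le ha) (nsmul_le_nsmul_left zero_le hb))
  · obtain ⟨α, rfl⟩ := Nat.exists_eq_add_of_le ha
    obtain ⟨β, rfl⟩ := Nat.exists_eq_add_of_le hb.le
    rw [add_nsmul_add_nsmul_left, add_nsmul_add_nsmul_right] at hπ hlt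
    have hαβ : π (β • v) = π (α • u) := by simpa only [map_add, add_right_inj] using hπ.symm
    have := h.le₂ α β (by omega) hαβ (lt_of_add_lt_add_left hlt).not_gt
    omega
  · obtain ⟨α, rfl⟩ := Nat.exists_eq_add_of_le ha.le
    obtain ⟨β, rfl⟩ := Nat.exists_eq_add_of_le hb
    rw [add_nsmul_add_nsmul_left, add_nsmul_add_nsmul_right] at hπ hlt
    have hαβ : π (α • u) = π (β • v) := by simpa only [map_add, add_right_inj] using hπ.symm
    have := h.le₃ α β (by omega) hαβ (lt_of_add_lt_add_left hlt)
    omega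
  · obtain ⟨α, rfl⟩ := Nat.exists_eq_add_of_le ha.le
    obtain ⟨β, rfl⟩ := Nat.exists_eq_add_of_le hb.le
    rw [add_nsmul, add_nsmul, add_add_add_comm, map_add π (_ + _), left_eq_add] at hπ
    exact h.map_add_ne_zero hw (by omega) (by omega) (by omega) (by omega) hπ

theorem injOn_staircase (hu : u ≠ 0) :
    Set.InjOn (fun w : ℕ × ℕ ↦ w.1 • u + w.2 • v) (staircase a₂ b₂ a₃ b₃) := by
  rintro ⟨a, b⟩ hw ⟨a', b'⟩ hw' heq
  wlog ha : a ≤ a' generalizing a b a' b'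
  · exact (this _ _ hw' _ _ hw heq.symm (le_of_not_ge ha)).symm
  have hb₂ := snd_lt_of_mem_staircase hw
  have hb₂' := snd_lt_of_mem_staircase hw'
  obtain ⟨α, rfl⟩ := Nat.exists_eq_add_of_le ha
  rcases le_or_gt b b' with hb | hb
  · obtain ⟨β, rfl⟩ := Nat.exists_eq_add_of_le hb
    simp only [add_nsmul, add_add_add_comm, left_eq_add, add_eq_zero] at heq
    obtain ⟨hαu, hβv⟩ := heq
    have : α = 0 := by
      by_contra hα
      exact (nsmul_pos (pos_iff_ne_zero.2 hu) hα).ne' hαu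
    have : β = 0 := by
      by_contra hβ
      have := h.le₂ 0 β (by omega) (by rw [hβv, zero_nsmul]) (by simp)
      omega
    simp_all
  · obtain ⟨β, rfl⟩ := Nat.exists_eq_add_of_le hb.le
    simp only [add_nsmul_add_nsmul_left, add_nsmul_add_nsmul_right, add_right_inj] at heq
    have := h.le₂ α β (by omega) (by rw [heq]) heq.not_lt
    omega

theorem mem_aperySet_of_mem_staircase {S : AddSubmonoid N} {T : Set S}
    (hS : S ≤ AddMonoidHom.mker π ⊔ AddSubmonoid.closure {u, v})
    (hT : (AddSubmonoid.closure T).map S.subtype = AddMonoidHom.mker π) (h0 : 0 ∉ T)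
    (hw : (a, b) ∈ staircase a₂ b₂ a₃ b₃) {s : S} (hs : (s : N) = a • u + b • v) :
    s ∈ aperySet T := by
  refine (mem_aperySet_iff_minimal hT h0).2 ⟨rfl, fun r hr hrs ↦ ?_⟩
  obtain ⟨p, hp, q, hq, hpq⟩ := AddSubmonoid.mem_sup.1 (hS r.2)
  obtain ⟨a', b', rfl⟩ := (AddSubmonoid.mem_closure_pair ..).1 hq
  have hle_r : a' • u + b' • v ≤ r := hpq ▸ le_add_self
  have hπ : π (a' • u + b' • v) = π (a • u + b • v) := by
    rw [← hs, ← hr, ← hpq, map_add π p, AddMonoidHom.mem_mker.1 hp, zero_add]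
  have heq : a' • u + b' • v = a • u + b • v :=
    (hle_r.trans (hs ▸ hrs)).eq_of_not_lt (h.not_lt_of_mem_staircase hw hπ)
  exact (hs.trans heq.symm).trans_le hle_r

end MinimalRelations

end MinimalRelations

section QuotientByKernel

variable {k A N Q : Type*} [CommRing k] [CommRing A] [Algebra k A] [AddCommMonoid N]
  [PartialOrder N] [IsOrderedCancelAddMonoid N] [CanonicallyOrderedAdd N] [AddCommGroup Q]
  {π : N →+ Q} {S : AddSubmonoid N} {T : Set S} (b : Module.Basis S k A)

theorem card_closure_le_finrank_quotient [Nontrivial k] [Finite Q] [WellQuasiOrderedLE N]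
    (hb : ∀ r s, b (r + s) = b r * b s)
    (hT : (AddSubmonoid.closure T).map S.subtype = AddMonoidHom.mker π) (h0 : 0 ∉ T)
    (U : Set S) :
    Nat.card (AddSubgroup.closure ((fun s : S ↦ π s) '' U)) ≤
      Module.finrank k (A ⧸ Ideal.span (b '' T)) := by
  have hle : (AddSubgroup.closure ((fun s : S ↦ π s) '' U)).toAddSubmonoid ≤ S.map π := by
    rw [AddSubgroup.closure_toAddSubmonoid_of_finite, AddSubmonoid.closure_le]
    rintro _ ⟨s, -, rfl⟩
    exact AddSubmonoid.mem_map_of_mem π s.2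
  calc Nat.card (AddSubgroup.closure ((fun s : S ↦ π s) '' U))
    _ ≤ Nat.card (S.map π) := Nat.card_mono (Set.toFinite _) hle
    _ ≤ Nat.card (aperySet T) := card_map_le_card_aperySet hT h0
    _ = Module.finrank k (A ⧸ Ideal.span (b '' T)) :=
        (finrank_quotient_span_image_basis b hb T).symm

theorem MinimalRelations.linearIndependent_mk_staircase {u v : S} {a₂ b₂ a₃ b₃ : ℕ}
    (h : MinimalRelations π (u : N) v a₂ b₂ a₃ b₃) (hu : u ≠ 0)
    (hb : ∀ r s, b (r + s) = b r * b s)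
    (hS : S ≤ AddMonoidHom.mker π ⊔ AddSubmonoid.closure {(u : N), (v : N)})
    (hT : (AddSubmonoid.closure T).map S.subtype = AddMonoidHom.mker π) (h0 : 0 ∉ T) :
    LinearIndependent k fun w : staircase a₂ b₂ a₃ b₃ ↦
      Ideal.Quotient.mk (Ideal.span (b '' T)) (b (w.1.1 • u + w.1.2 • v)) := by
  let toApery (w : staircase a₂ b₂ a₃ b₃) : aperySet T :=
    ⟨w.1.1 • u + w.1.2 • v, h.mem_aperySet_of_mem_staircase hS hT h0 w.2 (by simp)⟩
  have toApery_injective : Function.Injective toApery := fun w w' hww' ↦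
    Subtype.ext <| h.injOn_staircase (by simpa using hu) w.2 w'.2 <| by
      simpa [toApery] using congrArg (fun s : aperySet T ↦ ((s : S) : N)) hww'
  exact (linearIndependent_mk_aperySet b hb T).comp toApery toApery_injective

end QuotientByKernel

section Bivariate

/-- The reduction of exponent vectors in `ℕ × ℕ` modulo `(d, n)`, whose image contains the
generators of the group `H`. -/
def residue (d n : ℕ) : ℕ × ℕ →+ ZMod d × ZMod n :=
  (Nat.castAddMonoidHom (ZMod d)).prodMap (Nat.castAddMonoidHom (ZMod n))

theorem residue_eq_residue_iff {d n : ℕ} {p q : ℕ × ℕ} :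
    residue d n p = residue d n q ↔ (d : ℤ) ∣ q.1 - p.1 ∧ (n : ℤ) ∣ q.2 - p.2 := by
  simp [residue, Prod.ext_iff, ← ZMod.intCast_eq_intCast_iff_dvd_sub]

theorem mker_residue (d n : ℕ) :
    AddMonoidHom.mker (residue d n) = AddSubmonoid.closure {(d, 0), (0, n)} := by
  ext ⟨p, q⟩
  simp [residue, AddSubmonoid.mem_closure_pair, ZMod.natCast_eq_zero_iff,
    dvd_iff_exists_eq_mul_left, @eq_comm _ p, @eq_comm _ q]

theorem prod_nat_lt_iff_int_sub {p q : ℕ × ℕ} :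
    p < q ↔ 0 ≤ (q.1 - p.1 : ℤ) ∧ 0 ≤ (q.2 - p.2 : ℤ) ∧
      ¬((q.1 - p.1 : ℤ) = 0 ∧ (q.2 - p.2 : ℤ) = 0) := by
  rw [Prod.lt_iff]
  omega

theorem minimalRelations_residue {d n e f l m a2 b2 a3 b3 : ℕ} {g2 h2 g3 h3 : ℤ}
    (hd : 0 < d) (hn : 0 < n)
    (hrel2x : -(a2 : ℤ) * e + b2 * f = g2) (hrel2y : -(a2 : ℤ) * l + b2 * m = h2)
    (hdvd2 : (d : ℤ) ∣ g2 ∧ (n : ℤ) ∣ h2)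
    (hmin2 : ∀ b' : ℕ, 0 < b' →
      (∃ (a' : ℕ) (g h : ℤ), a' < addOrderOf (residue d n (e, l)) ∧
        -(a' : ℤ) * e + b' * f = g ∧ -(a' : ℤ) * l + b' * m = h ∧
        (d : ℤ) ∣ g ∧ (n : ℤ) ∣ h ∧ (0 < g ∨ 0 < h ∨ (g = 0 ∧ h = 0))) → b2 ≤ b')
    (hrel3x : (a3 : ℤ) * e - b3 * f = g3) (hrel3y : (a3 : ℤ) * l - b3 * m = h3)
    (hdvd3 : (d : ℤ) ∣ g3 ∧ (n : ℤ) ∣ h3)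
    (hmin3 : ∀ a' : ℕ, 0 < a' →
      (∃ (b' : ℕ) (g h : ℤ), b' < addOrderOf (residue d n (f, m)) ∧
        (a' : ℤ) * e - b' * f = g ∧ (a' : ℤ) * l - b' * m = h ∧
        (d : ℤ) ∣ g ∧ (n : ℤ) ∣ h ∧ 0 ≤ g ∧ 0 ≤ h ∧ ¬(g = 0 ∧ h = 0)) → a3 ≤ a') :
    MinimalRelations (residue d n) (e, l) (f, m) a2 b2 a3 b3 := by
  have : NeZero d := ⟨hd.ne'⟩
  have : NeZero n := ⟨hn.ne'⟩
  subst hrel2x hrel2y hrel3x hrel3y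
  have residue_eq_iff (a b e f l m : ℕ) : residue d n (b • (f, m)) = residue d n (a • (e, l)) ↔
      (d : ℤ) ∣ a * e - b * f ∧ (n : ℤ) ∣ a * l - b * m := by
    rw [residue_eq_residue_iff]
    simp only [Prod.smul_mk, smul_eq_mul, Nat.cast_mul]
  have nsmul_lt_iff (a b : ℕ) : b • (f, m) < a • (e, l) ↔ 0 ≤ (a * e - b * f : ℤ) ∧
      0 ≤ (a * l - b * m : ℤ) ∧ ¬((a * e - b * f : ℤ) = 0 ∧ (a * l - b * m : ℤ) = 0) := by
    rw [prod_nat_lt_iff_int_sub]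
    simp only [Prod.smul_mk, smul_eq_mul, Nat.cast_mul]
  refine .of_lt_addOrderOf ?_ (fun a b ha hb hab hlt ↦ ?_) ?_ (fun a b hb ha hab hlt ↦ ?_)
  · rw [eq_comm, residue_eq_iff]
    simpa only [neg_mul, neg_add_eq_sub] using hdvd2
  · rw [eq_comm, residue_eq_iff] at hab
    rw [nsmul_lt_iff] at hlt
    refine hmin2 b hb ⟨a, _, _, ha, rfl, rfl, ?_, ?_, ?_⟩
    · simpa [neg_add_eq_sub] using hab.1
    · simpa [neg_add_eq_sub] using hab.2
    · lia
  · rwa [eq_comm, residue_eq_iff]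
  · rw [eq_comm, residue_eq_iff] at hab
    rw [nsmul_lt_iff] at hlt
    exact hmin3 a ha ⟨b, _, _, hb, rfl, rfl, hab.1, hab.2, hlt⟩

/-- The monomial `x ^ p y ^ q` attached to an exponent vector `(p, q)`, as a homomorphism from
the additive monoid of exponent vectors written multiplicatively. -/
noncomputable def monomialHom (k : Type*) [CommSemiring k] :
    Multiplicative (ℕ × ℕ) →* MvPolynomial (Fin 2) k where
  toFun p := X 0 ^ p.toAdd.1 * X 1 ^ p.toAdd.2
  map_one' := by simp
  map_mul' p q := by simp only [toAdd_mul, Prod.fst_add, Prod.snd_add, pow_add]; ring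

theorem monomialHom_ofAdd (k : Type*) [CommSemiring k] (p : ℕ × ℕ) :
    monomialHom k (.ofAdd p) = X 0 ^ p.1 * X 1 ^ p.2 := rfl

theorem linearIndependent_monomialHom (k : Type*) [CommSemiring k] :
    LinearIndependent k fun p : ℕ × ℕ ↦ monomialHom k (.ofAdd p) := by
  have hinj : Function.Injective fun p : ℕ × ℕ ↦
      (Finsupp.single 0 p.1 + Finsupp.single 1 p.2 : Fin 2 →₀ ℕ) := by
    intro p q hpq
    exact Prod.ext (by simpa using DFunLike.congr_fun hpq 0)
      (by simpa using DFunLike.congr_fun hpq 1)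
  convert (basisMonomials (Fin 2) k).linearIndependent.comp _ hinj with p
  simp [monomialHom_ofAdd, X_pow_eq_monomial, monomial_mul]

variable {d n e f l m : ℕ}

/-- The exponent vectors of the generators of `k[x ^ d, x ^ e y ^ l, x ^ f y ^ m, y ^ n]`. -/
def generators (d n e f l m : ℕ) : Set (ℕ × ℕ) :=
  {(d, 0), (e, l), (f, m), (0, n)}

theorem closure_generators :
    AddSubmonoid.closure (generators d n e f l m) =
      AddMonoidHom.mker (residue d n) ⊔ AddSubmonoid.closure {(e, l), (f, m)} := by
  rw [mker_residue, ← AddSubmonoid.closure_union]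
  congr 1
  grind [generators]

theorem exists_basis_closure_generators {k : Type*} [CommRing k]
    {R : Subalgebra k (MvPolynomial (Fin 2) k)}
    (hR : R = Algebra.adjoin k {X 0 ^ d, X 0 ^ e * X 1 ^ l, X 0 ^ f * X 1 ^ m, X 1 ^ n}) :
    ∃ b : Module.Basis (AddSubmonoid.closure (generators d n e f l m)) k R,
      (∀ r s, b (r + s) = b r * b s) ∧
        ∀ s, (b s : MvPolynomial (Fin 2) k) = X 0 ^ (s : ℕ × ℕ).1 * X 1 ^ (s : ℕ × ℕ).2 := by
  have image_generators : (fun p ↦ monomialHom k (.ofAdd p)) '' generators d n e f l m =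
      {X 0 ^ d, X 0 ^ e * X 1 ^ l, X 0 ^ f * X 1 ^ m, X 1 ^ n} := by
    simp [generators, Set.image_insert_eq, monomialHom_ofAdd]
  rw [← image_generators] at hR
  subst hR
  obtain ⟨b, hb⟩ := exists_basis_adjoin_image (monomialHom k) (linearIndependent_monomialHom k)
    (generators d n e f l m)
  exact ⟨b, fun r s ↦ Subtype.ext (by simp [hb, ofAdd_add]), hb⟩

end Bivariate

theorem stmt_11_general {d n e f l m a2 b2 a3 b3 : ℕ} (hd : 0 < d) (hn : 0 < n)
    (hel : (e, l) ≠ (0, 0)) (h : MinimalRelations (residue d n) (e, l) (f, m) a2 b2 a3 b3)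
    {k : Type*} [CommRing k] [Nontrivial k] {R : Subalgebra k (MvPolynomial (Fin 2) k)}
    (hR : R = Algebra.adjoin k {X 0 ^ d, X 0 ^ e * X 1 ^ l, X 0 ^ f * X 1 ^ m, X 1 ^ n})
    {xd yn u v : R}
    (hxd : (xd : MvPolynomial (Fin 2) k) = X 0 ^ d) (hyn : (yn : MvPolynomial (Fin 2) k) = X 1 ^ n)
    (hu : (u : MvPolynomial (Fin 2) k) = X 0 ^ e * X 1 ^ l)
    (hv : (v : MvPolynomial (Fin 2) k) = X 0 ^ f * X 1 ^ m) :
    Nat.card (AddSubgroup.closure {((e : ZMod d), (l : ZMod n)), ((f : ZMod d), (m : ZMod n))}) ≤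
      Module.finrank k (R ⧸ Ideal.span {xd, yn}) ∧
    LinearIndependent k fun w : staircase a2 b2 a3 b3 ↦
      Ideal.Quotient.mk (Ideal.span {xd, yn}) (u ^ w.1.1 * v ^ w.1.2) := by
  have : NeZero d := ⟨hd.ne'⟩
  have : NeZero n := ⟨hn.ne'⟩
  obtain ⟨b, b_add, coe_b⟩ := exists_basis_closure_generators hR
  have exists_eq {r : R} {p : ℕ × ℕ} (hp : p ∈ generators d n e f l m)
      (hr : (r : MvPolynomial (Fin 2) k) = X 0 ^ p.1 * X 1 ^ p.2) : ∃ s, s.1 = p ∧ b s = r :=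
    ⟨⟨p, AddSubmonoid.subset_closure hp⟩, rfl, Subtype.ext ((coe_b _).trans hr.symm)⟩
  obtain ⟨p, coe_p, rfl⟩ := exists_eq (p := (d, 0)) (by simp [generators]) (by simpa using hxd)
  obtain ⟨q, coe_q, rfl⟩ := exists_eq (p := (0, n)) (by simp [generators]) (by simpa using hyn)
  obtain ⟨s, coe_s, rfl⟩ := exists_eq (p := (e, l)) (by simp [generators]) hu
  obtain ⟨t, coe_t, rfl⟩ := exists_eq (p := (f, m)) (by simp [generators]) hv
  have hT : (AddSubmonoid.closure {p, q}).map (AddSubmonoid.subtype _) =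
      AddMonoidHom.mker (residue d n) := by
    rw [AddMonoidHom.map_mclosure, Set.image_pair, mker_residue, ← coe_p, ← coe_q]; rfl
  have h0 : 0 ∉ ({p, q} : Set (AddSubmonoid.closure (generators d n e f l m))) := by
    rintro (rfl | rfl)
    · exact hd.ne (congrArg Prod.fst coe_p)
    · exact hn.ne (congrArg Prod.snd coe_q)
  rw [← Set.image_pair]
  constructor
  · have := card_closure_le_finrank_quotient b b_add hT h0 {s, t}
    rwa [Set.image_pair, coe_s, coe_t] at this
  · have b_nsmul_add (i j : ℕ) : b (i • s + j • t) = b s ^ i * b t ^ j :=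
      Subtype.ext <| by
        simp only [coe_b, AddSubmonoid.coe_add, AddSubmonoidClass.coe_nsmul, Prod.fst_add,
          Prod.snd_add, Prod.smul_fst, Prod.smul_snd, smul_eq_mul, MulMemClass.coe_mul,
          SubmonoidClass.coe_pow]
        ring
    rw [← coe_s, ← coe_t] at h
    have := h.linearIndependent_mk_staircase b (by rintro rfl; exact hel coe_s.symm) b_add
      (by rw [coe_s, coe_t, ← closure_generators]) hT h0
    simpa only [b_nsmul_add] using this

/-- Let `R = k[x^d, x^e y^ℓ, x^f y^m, y^n]`.  Then `dim_k R/(x^d, y^n) ≥ |H|`, where `H` is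
the subgroup of `(ℤ/d) ⊕ (ℤ/n)` generated by `(e,ℓ)` and `(f,m)`; indeed the `|H|` monomials
`x^{ae+bf} y^{aℓ+bm}` for `(a,b) ∈ B₀` are linearly independent in `R/(x^d, y^n)`. -/
theorem stmt_11
    (d n e f l m : ℕ) (hd : 0 < d) (hn : 0 < n) (hel : (e, l) ≠ (0, 0))
    (a2 b2 a3 b3 : ℕ) (g2 h2 g3 h3 : ℤ)
    -- `b₂` is the smallest positive integer admitting a relation
    -- `-a₂(e,ℓ) + b₂(f,m) = (g₂,h₂) ∈ dℤ ⊕ nℤ` with `a₂ < ord((e,ℓ))` and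
    -- `g₂ > 0` or `h₂ > 0` or `(g₂,h₂) = (0,0)`.
    (hb2pos : 0 < b2)
    (ha2ord : a2 < addOrderOf (((e : ZMod d), (l : ZMod n)) : ZMod d × ZMod n))
    (hrel2x : -(a2 : ℤ) * e + b2 * f = g2) (hrel2y : -(a2 : ℤ) * l + b2 * m = h2)
    (hdvd2 : (d : ℤ) ∣ g2 ∧ (n : ℤ) ∣ h2)
    (hsign2 : 0 < g2 ∨ 0 < h2 ∨ (g2 = 0 ∧ h2 = 0))
    (hmin2 : ∀ b' : ℕ, 0 < b' →
      (∃ (a' : ℕ) (g h : ℤ), a' < addOrderOf (((e : ZMod d), (l : ZMod n)) : ZMod d × ZMod n) ∧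
        -(a' : ℤ) * e + b' * f = g ∧ -(a' : ℤ) * l + b' * m = h ∧
        (d : ℤ) ∣ g ∧ (n : ℤ) ∣ h ∧ (0 < g ∨ 0 < h ∨ (g = 0 ∧ h = 0))) → b2 ≤ b')
    -- `a₃` is the smallest positive integer admitting a relation
    -- `a₃(e,ℓ) - b₃(f,m) = (g₃,h₃) ∈ dℤ ⊕ nℤ` with `b₃ < ord((f,m))`,
    -- `g₃, h₃ ≥ 0` not both zero.
    (ha3pos : 0 < a3)
    (hb3ord : b3 < addOrderOf (((f : ZMod d), (m : ZMod n)) : ZMod d × ZMod n))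
    (hrel3x : (a3 : ℤ) * e - b3 * f = g3) (hrel3y : (a3 : ℤ) * l - b3 * m = h3)
    (hdvd3 : (d : ℤ) ∣ g3 ∧ (n : ℤ) ∣ h3)
    (hsign3 : 0 ≤ g3 ∧ 0 ≤ h3 ∧ ¬(g3 = 0 ∧ h3 = 0))
    (hmin3 : ∀ a' : ℕ, 0 < a' →
      (∃ (b' : ℕ) (g h : ℤ), b' < addOrderOf (((f : ZMod d), (m : ZMod n)) : ZMod d × ZMod n) ∧
        (a' : ℤ) * e - b' * f = g ∧ (a' : ℤ) * l - b' * m = h ∧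
        (d : ℤ) ∣ g ∧ (n : ℤ) ∣ h ∧ 0 ≤ g ∧ 0 ≤ h ∧ ¬(g = 0 ∧ h = 0)) → a3 ≤ a')
    (k : Type*) [Field k]
    (R : Subalgebra k (MvPolynomial (Fin 2) k))
    (hR : R = Algebra.adjoin k
      ({X 0 ^ d, X 0 ^ e * X 1 ^ l, X 0 ^ f * X 1 ^ m, X 1 ^ n} :
        Set (MvPolynomial (Fin 2) k)))
    (xd yn : R)
    (hxd : (xd : MvPolynomial (Fin 2) k) = X 0 ^ d)
    (hyn : (yn : MvPolynomial (Fin 2) k) = X 1 ^ n)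
    (u v : R)
    (hu : (u : MvPolynomial (Fin 2) k) = X 0 ^ e * X 1 ^ l)
    (hv : (v : MvPolynomial (Fin 2) k) = X 0 ^ f * X 1 ^ m)
    (H : AddSubgroup (ZMod d × ZMod n))
    (hH : H = AddSubgroup.closure {((e : ZMod d), (l : ZMod n)), ((f : ZMod d), (m : ZMod n))})
    (B0 : Set (ℕ × ℕ))
    (hB0 : B0 = {w : ℕ × ℕ | (w.1 < a3 - a2 ∧ w.2 < b2) ∨ (w.1 < a3 ∧ w.2 < b2 - b3)}) :
    Nat.card H ≤ Module.finrank k (R ⧸ (Ideal.span {xd, yn} : Ideal R)) ∧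
    LinearIndependent k
      (fun w : B0 => Ideal.Quotient.mk (Ideal.span {xd, yn} : Ideal R)
        (u ^ (w : ℕ × ℕ).1 * v ^ (w : ℕ × ℕ).2)) := by
  subst hH hB0
  exact stmt_11_general hd hn hel (minimalRelations_residue hd hn hrel2x hrel2y hdvd2 hmin2
    hrel3x hrel3y hdvd3 hmin3) hR hxd hyn hu hv
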